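/- Let D ≥ 1, δ > 0, K ≥ 0, and let L : ℝ^D → ℝ be K-Lipschitz with respect to the Euclidean norm. Then for every c ≥ K, sup_{λ ∈ ℝ^D} [ L(λ) − c · max(0, ‖λ‖₂ − δ) ] = sup_{λ : ‖λ‖₂ ≤ δ} L(λ); that is, the hinge-penalized unconstrained maximization with penalty coefficient at least the Lipschitz constant has the same optimal value as the ℓ₂-constrained maximization over the ball of radius δ. -/

import Mathlib

/-- Hinge-penalty equivalence for the AdvGAN-type objective: if `L` is `K`-Lipschitz for the
Euclidean norm and the penalty coefficient `c` satisfies `c ≥ K`, then the unconstrained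
supremum of `L(λ) − c · max(0, ‖λ‖₂ − δ)` equals the supremum of `L` over the ℓ₂ ball of
radius `δ`. -/
theorem hinge_penalty_equals_constrained
    (D : ℕ) (hD : 1 ≤ D) (δ K c : ℝ) (hδ : 0 < δ) (hK : 0 ≤ K)
    (L : EuclideanSpace ℝ (Fin D) → ℝ)
    (hL : ∀ u v : EuclideanSpace ℝ (Fin D), |L u - L v| ≤ K * ‖u - v‖)
    (hc : K ≤ c) :
    sSup (Set.range fun l : EuclideanSpace ℝ (Fin D) => L l - c * max 0 (‖l‖ - δ))
      = sSup (L '' {l : EuclideanSpace ℝ (Fin D) | ‖l‖ ≤ δ}) := by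
  have key : ∀ l : EuclideanSpace ℝ (Fin D), ∃ p : EuclideanSpace ℝ (Fin D),
      ‖p‖ ≤ δ ∧ L l - c * max 0 (‖l‖ - δ) ≤ L p := by
    intro l
    by_cases h : ‖l‖ ≤ δ
    · refine ⟨l, h, ?_⟩
      rw [max_eq_left (by linarith)]
      simp
    · push Not at h
      have hl : 0 < ‖l‖ := hδ.trans h
      refine ⟨(δ / ‖l‖) • l, ?_, ?_⟩
      · rw [norm_smul, Real.norm_of_nonneg (by positivity), div_mul_cancel₀ _ hl.ne']
      · rw [max_eq_right (by linarith)]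
        have h1 := (le_abs_self _).trans (hL l ((δ / ‖l‖) • l))
        have h2 : ‖l - (δ / ‖l‖) • l‖ = ‖l‖ - δ := by
          have h3 : l - (δ / ‖l‖) • l = (1 - δ / ‖l‖) • l := by
            rw [sub_smul, one_smul]
          have h4 : δ / ‖l‖ ≤ 1 := (div_le_one hl).2 h.le
          rw [h3, norm_smul, Real.norm_of_nonneg (by linarith), sub_mul, one_mul,
            div_mul_cancel₀ _ hl.ne']
        rw [h2] at h1
        have h5 : K * (‖l‖ - δ) ≤ c * (‖l‖ - δ) :=
          mul_le_mul_of_nonneg_right hc (by linarith)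
        linarith
  have hb : BddAbove (L '' {l : EuclideanSpace ℝ (Fin D) | ‖l‖ ≤ δ}) := by
    refine ⟨L 0 + K * δ, ?_⟩
    rintro _ ⟨l, hl, rfl⟩
    have h1 := (le_abs_self _).trans (hL l 0)
    rw [sub_zero] at h1
    have h2 : K * ‖l‖ ≤ K * δ := mul_le_mul_of_nonneg_left hl hK
    linarith
  have hle : ∀ l : EuclideanSpace ℝ (Fin D), L l - c * max 0 (‖l‖ - δ) ≤
      sSup (L '' {l : EuclideanSpace ℝ (Fin D) | ‖l‖ ≤ δ}) := by
    intro l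
    obtain ⟨p, hp, h⟩ := key l
    exact h.trans (le_csSup hb ⟨p, hp, rfl⟩)
  apply le_antisymm
  · apply csSup_le (Set.range_nonempty _)
    rintro _ ⟨l, rfl⟩
    exact hle l
  · refine csSup_le ⟨L 0, ⟨0, by simpa using hδ.le, rfl⟩⟩ ?_
    rintro _ ⟨l, hl, rfl⟩
    refine le_csSup ⟨_, by rintro _ ⟨m, rfl⟩; exact hle m⟩ ⟨l, ?_⟩
    have hl' : ‖l‖ ≤ δ := hl
    simp [max_eq_left (show ‖l‖ - δ ≤ 0 by linarith)]
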